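/- Let (X_t) be a Markov process on a Polish space 𝒳 with invariant probability measure μ_⋆, and let G : 𝒳 → [1,∞) be measurable. Suppose f : [1,∞) → [0,1] is such that y ↦ y·f(y) is strictly increasing to infinity and μ_⋆(G ≥ y) ≥ f(y) for every y ≥ 1, and g : 𝒳 × ℝ₊ → [1,∞) is increasing in its second argument with E[G(X_t) | X_0 = x_0] ≤ g(x_0, t). Then for every t ≥ 0, ‖μ_t − μ_⋆‖_TV ≥ (1/2) f((Id·f)^{-1}(2 g(x_0, t))), where μ_t is the law of X_t with X_0 = x_0 and (Id·f)^{-1} is the inverse of y ↦ y f(y). -/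

import Mathlib

open MeasureTheory

/-- Total variation distance between two measures. -/
noncomputable def tvDist {X : Type*} [MeasurableSpace X]
    (μ ν : Measure X) : ℝ :=
  ⨆ A : Set X, |(μ A).toReal - (ν A).toReal|

/-- lower bound on the speed of convergence toward the invariant
measure.  Here `μ t` is the law of the Markov process at time `t` started from
`x₀` and `μs` is the invariant measure; the Markov property itself is not
needed, only the tail lower bound for `μs` and the moment upper bound for
`μ t`. -/
theorem tv_lower_bound_convergence {X : Type*} [MeasurableSpace X]
    (x₀ : X) (μ : ℝ → Measure X) (μs : Measure X)
    [∀ t, IsProbabilityMeasure (μ t)] [IsProbabilityMeasure μs]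
    (G : X → ℝ) (hGmeas : Measurable G) (hG1 : ∀ x, 1 ≤ G x)
    (hGint : ∀ t, 0 ≤ t → Integrable G (μ t))
    (f : ℝ → ℝ) (hf01 : ∀ y, 1 ≤ y → f y ∈ Set.Icc (0:ℝ) 1)
    (hfmono : StrictMonoOn (fun y => y * f y) (Set.Ici 1))
    (hftop : Filter.Tendsto (fun y => y * f y) Filter.atTop Filter.atTop)
    (hf_tail : ∀ y, 1 ≤ y → f y ≤ (μs {x | y ≤ G x}).toReal)
    (g : X → ℝ → ℝ) (hg1 : ∀ x t, 0 ≤ t → 1 ≤ g x t)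
    (hgmono : ∀ x, MonotoneOn (g x) (Set.Ici 0))
    (hmoment : ∀ t, 0 ≤ t → ∫ x, G x ∂(μ t) ≤ g x₀ t)
    (inv : ℝ → ℝ)
    (hinv : ∀ z, 1 ≤ z → 1 ≤ inv z ∧ inv z * f (inv z) = z) :
    ∀ t, 0 ≤ t → (1/2) * f (inv (2 * g x₀ t)) ≤ tvDist (μ t) μs := by
  intro t ht
  have hg := hg1 x₀ t ht
  obtain ⟨hy1, hy⟩ := hinv (2 * g x₀ t) (by linarith)
  set y := inv (2 * g x₀ t)
  have hy0 : 0 < y := by linarith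
  have hmk : y * (μ t).real {x | y ≤ G x} ≤ ∫ x, G x ∂(μ t) :=
    mul_meas_ge_le_integral_of_nonneg
      (Filter.Eventually.of_forall fun x => by have := hG1 x; simp only [Pi.zero_apply]; linarith)
      (hGint t ht) y
  have hm := hmoment t ht
  have h1 : (μ t {x | y ≤ G x}).toReal ≤ f y / 2 := by
    have h : y * (μ t {x | y ≤ G x}).toReal ≤ y * (f y / 2) := by
      have : y * (μ t {x | y ≤ G x}).toReal ≤ ∫ x, G x ∂(μ t) := hmk
      linarith
    exact le_of_mul_le_mul_left h hy0
  have h2 := hf_tail y hy1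
  have hbdd : BddAbove (Set.range fun A : Set X => |(μ t A).toReal - (μs A).toReal|) := by
    refine ⟨1, ?_⟩
    rintro _ ⟨A, rfl⟩
    have a1 : (μ t A).toReal ≤ 1 := measureReal_le_one
    have a2 : (μs A).toReal ≤ 1 := measureReal_le_one
    have a3 : 0 ≤ (μ t A).toReal := ENNReal.toReal_nonneg
    have a4 : 0 ≤ (μs A).toReal := ENNReal.toReal_nonneg
    exact abs_le.2 ⟨by linarith, by linarith⟩
  have h3 : |(μ t {x | y ≤ G x}).toReal - (μs {x | y ≤ G x}).toReal| ≤ tvDist (μ t) μs :=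
    le_ciSup hbdd {x | y ≤ G x}
  have h4 := neg_abs_le ((μ t {x | y ≤ G x}).toReal - (μs {x | y ≤ G x}).toReal)
  linarith
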